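/- Let p ≥ 2 and let ψ_0 := (L_1 + L_0)/√2, ψ_k := (L_{k+1} − L_{k−1})/√(4k+2) for 1 ≤ k ≤ p−1, ψ_p := (L_p − L_{p−1})/√(4p+2). Then: (i) ∫_{−1}^{1} ψ_k ψ_j ds = 0 whenever |k − j| > 2; and (ii) there exists a constant C > 0, independent of p and k, such that ∫_{−1}^{1} ψ_k² ds ≤ C (k+1)^{−2} for all k = 0, …, p. -/

import Mathlib

open Polynomial

/-- The `k`-th Legendre polynomial (Rodrigues' formula), normalized so that `L_k(1) = 1`
and `∫_{−1}^{1} L_k L_j ds = 2δ_{kj}/(2k+1)`. -/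
noncomputable def legendre (k : ℕ) : Polynomial ℝ :=
  ((2 ^ k * (Nat.factorial k) : ℝ))⁻¹ •
    ((fun q => Polynomial.derivative q)^[k] ((Polynomial.X ^ 2 - 1) ^ k))

/-- The reconstruction operator `I : P_p → P_{p+1}`,
`I v := v − v(−1)·(−1)^p (L_p − L_{p+1})/2`. -/
noncomputable def recon (p : ℕ) (v : Polynomial ℝ) : Polynomial ℝ :=
  v - (v.eval (-1) * (-1 : ℝ) ^ p / 2) • (legendre p - legendre (p + 1))

/-- The basis polynomials `ψ_0 := (L_1 + L_0)/√2`,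
`ψ_k := (L_{k+1} − L_{k−1})/√(4k+2)` for `1 ≤ k ≤ p−1`, and
`ψ_p := (L_p − L_{p−1})/√(4p+2)`. -/
noncomputable def psi (p k : ℕ) : Polynomial ℝ :=
  if k = 0 then (Real.sqrt 2)⁻¹ • (legendre 1 + legendre 0)
  else if k = p then (Real.sqrt (4 * (p : ℝ) + 2))⁻¹ • (legendre p - legendre (p - 1))
  else (Real.sqrt (4 * (k : ℝ) + 2))⁻¹ • (legendre (k + 1) - legendre (k - 1))

/-!
Repeated integration by parts in Rodrigues' formula makes `L_n` orthogonal to every polynomial of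
degree below `n`. Its norm comes from integrating the derivative of `x L_n²`: the boundary terms add
up to `2` because `L_n(±1)² = 1`, while `x L_n' - n L_n` has degree below `n`, so
`(2n + 1) ∫ L_n² = 2`.

For `k ≥ 1`, `ψ_k` is `(4k + 2)^(-1/2) (L_a - L_{k-1})` with `a ∈ {k, k + 1}`. Hence it is
orthogonal to all polynomials of degree below `k - 1`, among them `ψ_j` for `j + 2 < k`. The squared
prefactor and the two squared norms each contribute a factor `O(1 / k)` to `∫ ψ_k²`.
-/

/-- Integration over the interval from `a` to `b` as a linear functional on polynomials; the
`L²` pairing of `q` and `r` is its value at `q * r`. -/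
noncomputable def intervalIntegralₗ (a b : ℝ) : ℝ[X] →ₗ[ℝ] ℝ where
  toFun q := ∫ x in a..b, q.eval x
  map_add' q r := by
    simp only [eval_add]
    exact intervalIntegral.integral_add (q.continuous.intervalIntegrable a b)
      (r.continuous.intervalIntegrable a b)
  map_smul' c q := by
    simp only [eval_smul, smul_eq_mul, RingHom.id_apply]
    exact intervalIntegral.integral_const_mul c _

theorem intervalIntegralₗ_apply (a b : ℝ) (q : ℝ[X]) :
    intervalIntegralₗ a b q = ∫ x in a..b, q.eval x :=
  rfl

theorem intervalIntegralₗ_derivative (a b : ℝ) (q : ℝ[X]) :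
    intervalIntegralₗ a b (derivative q) = q.eval b - q.eval a :=
  intervalIntegral.integral_eq_sub_of_hasDerivAt (fun x _ => q.hasDerivAt x)
    ((derivative q).continuous.intervalIntegrable a b)

theorem intervalIntegralₗ_derivative_mul {a b : ℝ} {f : ℝ[X]} (hfa : f.eval a = 0)
    (hfb : f.eval b = 0) (q : ℝ[X]) :
    intervalIntegralₗ a b (derivative f * q) = -intervalIntegralₗ a b (f * derivative q) := by
  have h := intervalIntegralₗ_derivative a b (f * q)
  rw [derivative_mul, map_add, eval_mul, eval_mul, hfa, hfb, zero_mul, zero_mul, sub_zero] at h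
  exact eq_neg_of_add_eq_zero_left h

theorem eval_iterate_derivative_eq_zero_of_pow_dvd {R : Type*} [CommRing R] {a : R} {f : R[X]}
    {m n : ℕ} (hf : (X - C a) ^ n ∣ f) (hmn : m < n) : (derivative^[m] f).eval a = 0 := by
  have h := pow_sub_dvd_iterate_derivative_of_pow_dvd m hf
  exact dvd_iff_isRoot.mp ((dvd_pow_self _ (Nat.sub_ne_zero_of_lt hmn)).trans h)

theorem intervalIntegralₗ_iterate_derivative_mul {a b : ℝ} {f : ℝ[X]} {m n : ℕ}
    (hfa : (X - C a) ^ n ∣ f) (hfb : (X - C b) ^ n ∣ f) (hmn : m ≤ n) (q : ℝ[X]) :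
    intervalIntegralₗ a b (derivative^[m] f * q) =
      (-1) ^ m * intervalIntegralₗ a b (f * derivative^[m] q) := by
  induction m generalizing q with
  | zero => simp
  | succ m ih =>
    rw [Function.iterate_succ_apply',
      intervalIntegralₗ_derivative_mul (eval_iterate_derivative_eq_zero_of_pow_dvd hfa hmn)
        (eval_iterate_derivative_eq_zero_of_pow_dvd hfb hmn),
      ih (Nat.le_of_succ_le hmn), ← Function.iterate_succ_apply]
    ring

theorem degree_X_mul_derivative_sub_lt {R : Type*} [CommRing R] {q : R[X]} {n : ℕ}
    (hq : q.natDegree ≤ n) : (X * derivative q - (n : R) • q).degree < (n : WithBot ℕ) := by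
  rw [degree_lt_iff_coeff_zero]
  intro m hm
  rcases hm.eq_or_lt with rfl | hlt
  · cases n with
    | zero => simp
    | succ n => simp [coeff_X_mul, coeff_derivative, mul_comm]
  · obtain ⟨m, rfl⟩ := Nat.exists_eq_succ_of_ne_zero (Nat.ne_zero_of_lt hlt)
    simp [coeff_X_mul, coeff_derivative, coeff_eq_zero_of_natDegree_lt (hq.trans_lt hlt)]

theorem legendre_eq_smul_iterate_derivative (n : ℕ) :
    legendre n = ((2 ^ n * n.factorial : ℝ))⁻¹ • derivative^[n] ((X ^ 2 - 1) ^ n) :=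
  rfl

theorem X_sq_sub_one_pow_eq_mul {R : Type*} [CommRing R] {a : R} (ha : a ^ 2 = 1) (n : ℕ) :
    (X ^ 2 - 1 : R[X]) ^ n = (X - C a) ^ n * (X + C a) ^ n := by
  rw [← mul_pow, ← C_1, ← ha, C_pow]
  ring

theorem eval_legendre_of_sq_eq_one {a : ℝ} (ha : a ^ 2 = 1) (n : ℕ) :
    (legendre n).eval a = a ^ n := by
  have h : (derivative^[n] ((X ^ 2 - 1 : ℝ[X]) ^ n)).eval a = n.factorial * (2 * a) ^ n := by
    have hfactor := X_sq_sub_one_pow_eq_mul ha n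
    rw [← Polynomial.map_id (p := (X ^ 2 - 1 : ℝ[X]) ^ n)] at hfactor
    simpa [two_mul] using aeval_iterate_derivative_self _ n a hfactor
  rw [legendre_eq_smul_iterate_derivative, eval_smul, h, smul_eq_mul, mul_pow]
  field_simp

theorem natDegree_legendre_le (n : ℕ) : (legendre n).natDegree ≤ n := by
  have hbase : ((X ^ 2 - 1 : ℝ[X]) ^ n).natDegree ≤ n * 2 :=
    natDegree_pow_le_of_le n (by compute_degree)
  calc (legendre n).natDegree
      ≤ ((X ^ 2 - 1 : ℝ[X]) ^ n).natDegree - n :=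
        (natDegree_smul_le _ _).trans (natDegree_iterate_derivative _ n)
    _ ≤ n := by omega

theorem integral_legendre_mul_eq_zero_of_degree_lt {n : ℕ} {q : ℝ[X]} (hq : q.degree < n) :
    intervalIntegralₗ (-1) 1 (legendre n * q) = 0 := by
  have hdvd {a : ℝ} (ha : a ^ 2 = 1) : (X - C a) ^ n ∣ (X ^ 2 - 1 : ℝ[X]) ^ n :=
    Dvd.intro _ (X_sq_sub_one_pow_eq_mul ha n).symm
  have hderiv : derivative^[n] q = 0 := iterate_derivative_eq_zero_of_degree_lt hq
  rw [legendre_eq_smul_iterate_derivative, smul_mul_assoc, map_smul,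
    intervalIntegralₗ_iterate_derivative_mul (hdvd (by norm_num)) (hdvd (by norm_num)) le_rfl,
    hderiv, mul_zero, map_zero, mul_zero, smul_zero]

theorem integral_legendre_mul_legendre_of_lt {m n : ℕ} (hmn : m < n) :
    intervalIntegralₗ (-1) 1 (legendre n * legendre m) = 0 :=
  integral_legendre_mul_eq_zero_of_degree_lt <|
    (degree_le_of_natDegree_le (natDegree_legendre_le m)).trans_lt (by exact_mod_cast hmn)

theorem integral_legendre_mul_self (n : ℕ) :
    intervalIntegralₗ (-1) 1 (legendre n * legendre n) = 2 / (2 * n + 1) := by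
  set L := legendre n with hL
  have hboundary : intervalIntegralₗ (-1) 1 (derivative (X * (L * L))) = 2 := by
    have hone : L.eval 1 * L.eval 1 = 1 := by
      rw [hL, eval_legendre_of_sq_eq_one (one_pow 2), one_pow, one_mul]
    have hneg : L.eval (-1) * L.eval (-1) = 1 := by
      rw [hL, eval_legendre_of_sq_eq_one neg_one_sq, ← mul_pow, neg_one_mul, neg_neg, one_pow]
    rw [intervalIntegralₗ_derivative, eval_mul, eval_mul, eval_mul, eval_mul, hone, hneg, eval_X,
      eval_X]
    norm_num
  have hortho := integral_legendre_mul_eq_zero_of_degree_lt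
    (degree_X_mul_derivative_sub_lt (natDegree_legendre_le n))
  have hsplit : derivative (X * (L * L)) =
      (2 * n + 1 : ℝ) • (L * L) + (2 : ℝ) • (L * (X * derivative L - (n : ℝ) • L)) := by
    simp only [derivative_mul, derivative_X, smul_eq_C_mul, map_add, map_mul, map_natCast,
      map_ofNat, map_one]
    ring
  rw [hsplit, map_add, map_smul, map_smul, hortho, smul_zero, add_zero, smul_eq_mul] at hboundary
  rw [eq_div_iff (by positivity), mul_comm]
  exact hboundary

theorem integral_smul_legendre_add_smul_sq {a b : ℕ} (hba : b < a) (c e : ℝ) :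
    intervalIntegralₗ (-1) 1 ((c • (legendre a + e • legendre b)) ^ 2) =
      c ^ 2 * (2 / (2 * a + 1) + e ^ 2 * (2 / (2 * b + 1))) := by
  have hexpand : (c • (legendre a + e • legendre b)) ^ 2 =
      c ^ 2 • (legendre a * legendre a + (2 * e) • (legendre a * legendre b) +
        e ^ 2 • (legendre b * legendre b)) := by
    simp only [smul_eq_C_mul, map_mul, map_pow, map_ofNat]
    ring
  simp only [hexpand, map_smul, map_add, smul_eq_mul, integral_legendre_mul_self,
    integral_legendre_mul_legendre_of_lt hba, mul_zero, add_zero]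

theorem natDegree_smul_legendre_add_smul_le {a b n : ℕ} (ha : a ≤ n) (hb : b ≤ n) (c e : ℝ) :
    (c • (legendre a + e • legendre b)).natDegree ≤ n :=
  (natDegree_smul_le _ _).trans <| natDegree_add_le_of_degree_le
    ((natDegree_legendre_le a).trans ha)
    ((natDegree_smul_le _ _).trans ((natDegree_legendre_le b).trans hb))

theorem psi_zero (p : ℕ) : psi p 0 = (√2)⁻¹ • (legendre 1 + (1 : ℝ) • legendre 0) := by
  rw [psi, if_pos rfl, one_smul]

theorem exists_psi_succ_eq (p m : ℕ) : ∃ a, m < a ∧ a ≤ m + 2 ∧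
    psi p (m + 1) = (√(4 * (m + 1 : ℕ) + 2))⁻¹ • (legendre a + (-1 : ℝ) • legendre m) := by
  simp only [neg_one_smul, ← sub_eq_add_neg]
  by_cases hp : m + 1 = p
  · exact ⟨m + 1, by omega, by omega, by simp [psi, ← hp]⟩
  · exact ⟨m + 2, by omega, le_rfl, by simp [psi, hp]⟩

theorem natDegree_psi_le (p k : ℕ) : (psi p k).natDegree ≤ k + 1 := by
  cases k with
  | zero =>
    rw [psi_zero]
    exact natDegree_smul_legendre_add_smul_le le_rfl zero_le_one _ _
  | succ m =>
    obtain ⟨a, -, ha, hpsi⟩ := exists_psi_succ_eq p m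
    rw [hpsi]
    exact natDegree_smul_legendre_add_smul_le ha (by omega) _ _

theorem integral_psi_succ_mul_eq_zero_of_degree_lt (p : ℕ) {m : ℕ} {q : ℝ[X]}
    (hq : q.degree < m) : intervalIntegralₗ (-1) 1 (psi p (m + 1) * q) = 0 := by
  obtain ⟨a, hma, -, hpsi⟩ := exists_psi_succ_eq p m
  have hqa : q.degree < a := hq.trans (by exact_mod_cast hma)
  simp only [hpsi, smul_mul_assoc, add_mul, map_smul, map_add, smul_zero, add_zero,
    integral_legendre_mul_eq_zero_of_degree_lt hq, integral_legendre_mul_eq_zero_of_degree_lt hqa]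

theorem integral_psi_mul_psi_eq_zero (p : ℕ) {k j : ℕ} (hjk : j + 2 < k) :
    intervalIntegralₗ (-1) 1 (psi p k * psi p j) = 0 := by
  obtain ⟨m, rfl⟩ := Nat.exists_eq_succ_of_ne_zero (Nat.ne_zero_of_lt hjk)
  refine integral_psi_succ_mul_eq_zero_of_degree_lt p ?_
  calc (psi p j).degree ≤ (j + 1 : ℕ) := degree_le_of_natDegree_le (natDegree_psi_le p j)
    _ < m := by exact_mod_cast Nat.lt_of_succ_lt_succ hjk

theorem integral_psi_sq_le (p k : ℕ) :
    intervalIntegralₗ (-1) 1 (psi p k ^ 2) ≤ 3 / ((k : ℝ) + 1) ^ 2 := by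
  cases k with
  | zero =>
    rw [psi_zero, integral_smul_legendre_add_smul_sq zero_lt_one, inv_pow,
      Real.sq_sqrt zero_le_two]
    norm_num
  | succ m =>
    obtain ⟨a, hma, -, hpsi⟩ := exists_psi_succ_eq p m
    rw [hpsi, integral_smul_legendre_add_smul_sq hma, inv_pow, Real.sq_sqrt (by positivity)]
    push_cast
    calc (4 * ((m : ℝ) + 1) + 2)⁻¹ * (2 / (2 * a + 1) + (-1) ^ 2 * (2 / (2 * m + 1)))
        ≤ (4 * ((m : ℝ) + 1) + 2)⁻¹ * (2 / (2 * m + 1) + (-1) ^ 2 * (2 / (2 * m + 1))) := by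
          gcongr
      _ = 2 / ((2 * (m : ℝ) + 3) * (2 * m + 1)) := by
          field_simp
          ring
      _ ≤ 3 / ((m : ℝ) + 1 + 1) ^ 2 := by
          rw [div_le_div_iff₀ (by positivity) (by positivity)]
          nlinarith [m.cast_nonneg (α := ℝ)]

/-- **Properties of the basis `ψ_k`.** (i) For `p ≥ 2` and `k, j ≤ p` with `|k − j| > 2`,
`∫_{−1}^{1} ψ_k ψ_j ds = 0`; and (ii) there is a constant `C > 0`, independent of `p` and
`k`, such that `∫_{−1}^{1} ψ_k² ds ≤ C (k+1)⁻²` for all `k = 0, …, p`. -/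
theorem psi_L2_properties :
    (∀ p : ℕ, 2 ≤ p → ∀ k ≤ p, ∀ j ≤ p, 2 < |(k : ℤ) - (j : ℤ)| →
      (∫ s in (-1 : ℝ)..1, (psi p k).eval s * (psi p j).eval s) = 0) ∧
    ∃ C : ℝ, 0 < C ∧ ∀ p : ℕ, 2 ≤ p → ∀ k ≤ p,
      (∫ s in (-1 : ℝ)..1, ((psi p k).eval s) ^ 2) ≤ C / ((k : ℝ) + 1) ^ 2 := by
  simp only [← eval_mul, ← eval_pow, ← intervalIntegralₗ_apply]
  refine ⟨fun p _ k _ j _ hkj => ?_, 3, three_pos, fun p _ k _ => integral_psi_sq_le p k⟩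
  rcases lt_abs.mp hkj with hjk | hkj
  · exact integral_psi_mul_psi_eq_zero p (by lia)
  · rw [mul_comm]
    exact integral_psi_mul_psi_eq_zero p (by lia)
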